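/- arXiv:0807.1333 — 2 statements merged into one kernel-verified Lean document; each statement's English description precedes it below -/
import Mathlib

section
/- For all r ∈ [0,1], the infimum of t(r,α) over α ∈ [0, 1/√2] equals min(1/2, h((1+r)/2)); moreover t(r,0) = 1/2 and t(r,1/2) = h((1+r)/2), so the infimum is attained at α = 0 or at α = 1/2. -/
/-!
Put `s = 1 - 4α²`, which ranges over `[-1, 1]`, and `H x = h((1 + x)/2)`, an even function. Then
`t(r,α) = 1/2 + H(r) + G(s)` with `G(s) = H(s)/2 - H(rs)`, and `α = 0`, `α = 1/2` correspond to
`s = 1`, `s = 0`. In nats `H' = -artanh`, hence `G''(s) = r²/(1 - r²s²) - 1/(2(1 - s²))`, which is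
nonnegative exactly when `r²s² ≤ 2r² - 1`. So the even function `G` is convex on some interval
`[-c, c]`, where it is minimal at `0`, and concave on `[c, 1]`, where it is at least
`min (G c) (G 1) ≥ min (G 0) (G 1)`.
-/

/-- The base-2 binary entropy function `h(p) = -p·log₂ p - (1-p)·log₂(1-p)`. -/
noncomputable def binEnt (p : ℝ) : ℝ := -(p * Real.logb 2 p) - (1 - p) * Real.logb 2 (1 - p)

/-- `g(r,α) = h((1+r)/2 - 2α²r)`. -/
noncomputable def gFun (r α : ℝ) : ℝ := binEnt ((1 + r) / 2 - 2 * α ^ 2 * r)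

/-- `t(r,α) = (1 + g(1,α))/2 + h((1+r)/2) - g(r,α)`. -/
noncomputable def tFun (r α : ℝ) : ℝ :=
  (1 + gFun 1 α) / 2 + binEnt ((1 + r) / 2) - gFun r α

open Real Set

section EvenFunction

variable {𝕜 β : Type*} [Field 𝕜] [LinearOrder 𝕜] [IsStrictOrderedRing 𝕜]
  [AddCommGroup β] [LinearOrder β] [IsOrderedAddMonoid β] [Module 𝕜 β] [IsStrictOrderedModule 𝕜 β]
  {f : 𝕜 → β} {b c x : 𝕜}

lemma apply_zero_le_of_even_of_convexOn (hf : f.Even) (hconv : ConvexOn 𝕜 (Icc (-c) c) f)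
    (hx : |x| ≤ c) : f 0 ≤ f x := by
  obtain ⟨hcx, hxc⟩ := abs_le.1 hx
  have hmid : (0 : 𝕜) ∈ segment 𝕜 x (-x) := midpoint_self_neg 𝕜 x ▸ midpoint_mem_segment x (-x)
  simpa only [hf x, max_self] using
    hconv.le_max_of_mem_segment ⟨hcx, hxc⟩ ⟨neg_le_neg hxc, neg_le.1 hcx⟩ hmid

lemma min_le_of_even_of_convexOn_of_concaveOn (hf : f.Even) (hc : 0 ≤ c)
    (hconv : ConvexOn 𝕜 (Icc (-c) c) f) (hconc : ConcaveOn 𝕜 (Icc c b) f) (hx : |x| ≤ b) :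
    min (f 0) (f b) ≤ f x := by
  rcases le_total |x| c with hxc | hcx
  · exact min_le_of_left_le (apply_zero_le_of_even_of_convexOn hf hconv hxc)
  · have habs : f |x| = f x := by
      rcases abs_choice x with h | h <;> rw [h]
      exact hf x
    have hcb : c ≤ b := hcx.trans hx
    calc min (f 0) (f b) ≤ min (f c) (f b) :=
          min_le_min_right _ (apply_zero_le_of_even_of_convexOn hf hconv (abs_of_nonneg hc).le)
      _ ≤ f |x| := hconc.min_le_of_mem_Icc ⟨le_rfl, hcb⟩ ⟨hcb, le_rfl⟩ ⟨hcx, hx⟩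
      _ = f x := habs

end EvenFunction

section OrderedRing

variable {R : Type*} [Ring R] [LinearOrder R] [IsStrictOrderedRing R] {r s : R}

lemma abs_mul_lt_one (hr : |r| ≤ 1) (hs : |s| < 1) : |r * s| < 1 :=
  abs_mul r s ▸ mul_lt_one_of_nonneg_of_lt_one_right hr (abs_nonneg s) hs

lemma one_sub_sq_pos (hs : |s| < 1) : 0 < 1 - s ^ 2 :=
  sub_pos.2 ((sq_lt_one_iff_abs_lt_one s).2 hs)

end OrderedRing

lemma hasDerivAt_artanh {x : ℝ} (hx : |x| < 1) : HasDerivAt artanh (1 / (1 - x ^ 2)) x := by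
  obtain ⟨hl, hr⟩ := abs_lt.1 hx
  have hadd : 1 + x ≠ 0 := by linarith
  have hsub : 1 - x ≠ 0 := by linarith
  have hlog : artanh =ᶠ[nhds x] fun y ↦ 1 / 2 * log ((1 + y) / (1 - y)) :=
    Filter.eventually_of_mem (Icc_mem_nhds hl hr) fun _ ↦ artanh_eq_half_log
  have hquot := ((hasDerivAt_id x).const_add 1).div ((hasDerivAt_id x).const_sub 1) hsub
  refine (((hquot.log (div_ne_zero hadd hsub)).const_mul (1 / 2)).congr_of_eventuallyEq
    hlog).congr_deriv ?_
  have hfactor : 1 - x ^ 2 = (1 - x) * (1 + x) := by ring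
  rw [hfactor]
  simp only [id, Pi.div_apply]
  field_simp
  ring

/-- The entropy, in nats, of a bit of bias `x`, that is, with probabilities `(1 + x) / 2` and
`(1 - x) / 2`. -/
noncomputable def biasEntropy (x : ℝ) : ℝ := binEntropy ((1 + x) / 2)

lemma biasEntropy_even : biasEntropy.Even := fun x ↦ by
  rw [biasEntropy, biasEntropy, ← binEntropy_one_sub]
  ring_nf

@[fun_prop]
lemma continuous_biasEntropy : Continuous biasEntropy :=
  binEntropy_continuous.comp (by fun_prop)

lemma hasDerivAt_biasEntropy {x : ℝ} (hx : |x| < 1) : HasDerivAt biasEntropy (-artanh x) x := by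
  obtain ⟨hl, hr⟩ := abs_lt.1 hx
  have hprob : HasDerivAt (fun y : ℝ ↦ (1 + y) / 2) (1 / 2) x :=
    ((hasDerivAt_id x).const_add 1).div_const 2
  refine ((hasDerivAt_binEntropy (by linarith) (by linarith)).comp x hprob).congr_deriv ?_
  have hcompl : 1 - (1 + x) / 2 = (1 - x) / 2 := by ring
  rw [artanh_eq_half_log ⟨hl.le, hr.le⟩, hcompl, log_div (by linarith) two_ne_zero,
    log_div (by linarith) two_ne_zero, log_div (by linarith) (by linarith)]
  ring

/-- The part of `t(r,α)` that depends on `α`, in nats and as a function of `s = 1 - 4α²`. -/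
noncomputable def biasEntropyGap (r s : ℝ) : ℝ := biasEntropy s / 2 - biasEntropy (r * s)

/-- For `|r| ≤ 1`, the point `c ∈ [0, 1]` such that the second derivative of `biasEntropyGap r` on
`(-1, 1)` is nonnegative where `|s| ≤ c` and nonpositive where `c ≤ |s|`. If `2 * r ^ 2 ≤ 1`,
including `r = 0`, it is `0`, because `√` of a negative number is `0`. -/
noncomputable def gapInflection (r : ℝ) : ℝ := √(2 * r ^ 2 - 1) / |r|

section Gap

variable {r s : ℝ}

lemma biasEntropyGap_even (r : ℝ) : (biasEntropyGap r).Even := fun s ↦ by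
  simp only [biasEntropyGap, mul_neg, biasEntropy_even _]

@[fun_prop]
lemma continuous_biasEntropyGap (r : ℝ) : Continuous (biasEntropyGap r) := by
  unfold biasEntropyGap
  fun_prop

lemma hasDerivAt_biasEntropyGap (hr : |r| ≤ 1) (hs : |s| < 1) :
    HasDerivAt (biasEntropyGap r) (r * artanh (r * s) - artanh s / 2) s := by
  have hscaled := (hasDerivAt_biasEntropy (abs_mul_lt_one hr hs)).comp s (hasDerivAt_const_mul r)
  refine (((hasDerivAt_biasEntropy hs).div_const 2).sub hscaled).congr_deriv ?_
  ring

lemma two_mul_one_sub_sq_mul_one_sub_sq_pos (hr : |r| ≤ 1) (hs : |s| < 1) :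
    0 < 2 * (1 - s ^ 2) * (1 - (r * s) ^ 2) :=
  mul_pos (mul_pos two_pos (one_sub_sq_pos hs)) (one_sub_sq_pos (abs_mul_lt_one hr hs))

lemma hasDerivAt_deriv_biasEntropyGap (hr : |r| ≤ 1) (hs : |s| < 1) :
    HasDerivAt (fun y ↦ r * artanh (r * y) - artanh y / 2)
      ((2 * r ^ 2 - 1 - (r * s) ^ 2) / (2 * (1 - s ^ 2) * (1 - (r * s) ^ 2))) s := by
  have hscaled := (hasDerivAt_artanh (abs_mul_lt_one hr hs)).comp s (hasDerivAt_const_mul r)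
  refine ((hscaled.const_mul r).sub ((hasDerivAt_artanh hs).div_const 2)).congr_deriv ?_
  have hs' : 1 - s ^ 2 ≠ 0 := (one_sub_sq_pos hs).ne'
  have hrs : 1 - r ^ 2 * s ^ 2 ≠ 0 := mul_pow r s 2 ▸ (one_sub_sq_pos (abs_mul_lt_one hr hs)).ne'
  rw [mul_pow]
  field_simp
  ring

lemma convexOn_biasEntropyGap {D : Set ℝ} (hr : |r| ≤ 1) (hD : Convex ℝ D)
    (hlt : ∀ s ∈ interior D, |s| < 1)
    (hsq : ∀ s ∈ interior D, (r * s) ^ 2 ≤ 2 * r ^ 2 - 1) :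
    ConvexOn ℝ D (biasEntropyGap r) :=
  convexOn_of_hasDerivWithinAt2_nonneg hD (by fun_prop)
    (fun s hs ↦ (hasDerivAt_biasEntropyGap hr (hlt s hs)).hasDerivWithinAt)
    (fun s hs ↦ (hasDerivAt_deriv_biasEntropyGap hr (hlt s hs)).hasDerivWithinAt)
    fun s hs ↦ div_nonneg (sub_nonneg.2 (hsq s hs))
      (two_mul_one_sub_sq_mul_one_sub_sq_pos hr (hlt s hs)).le

lemma concaveOn_biasEntropyGap {D : Set ℝ} (hr : |r| ≤ 1) (hD : Convex ℝ D)
    (hlt : ∀ s ∈ interior D, |s| < 1)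
    (hsq : ∀ s ∈ interior D, 2 * r ^ 2 - 1 ≤ (r * s) ^ 2) :
    ConcaveOn ℝ D (biasEntropyGap r) :=
  concaveOn_of_hasDerivWithinAt2_nonpos hD (by fun_prop)
    (fun s hs ↦ (hasDerivAt_biasEntropyGap hr (hlt s hs)).hasDerivWithinAt)
    (fun s hs ↦ (hasDerivAt_deriv_biasEntropyGap hr (hlt s hs)).hasDerivWithinAt)
    fun s hs ↦ div_nonpos_of_nonpos_of_nonneg (sub_nonpos.2 (hsq s hs))
      (two_mul_one_sub_sq_mul_one_sub_sq_pos hr (hlt s hs)).le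

lemma gapInflection_nonneg (r : ℝ) : 0 ≤ gapInflection r := by
  unfold gapInflection
  positivity

lemma gapInflection_le_one (hr : |r| ≤ 1) : gapInflection r ≤ 1 := by
  refine div_le_one_of_le₀ (sqrt_le_iff.2 ⟨abs_nonneg r, ?_⟩) (abs_nonneg r)
  linarith [sq_abs r, (sq_le_one_iff_abs_le_one r).2 hr]

lemma mul_sq_le_of_abs_lt_gapInflection (hs : |s| < gapInflection r) :
    (r * s) ^ 2 ≤ 2 * r ^ 2 - 1 := by
  have hr : r ≠ 0 := by
    rintro rfl
    simpa [gapInflection] using (abs_nonneg s).trans_lt hs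
  rw [gapInflection, lt_div_iff₀ (abs_pos.2 hr), mul_comm |s|, ← abs_mul,
    lt_sqrt (abs_nonneg _), sq_abs] at hs
  exact hs.le

lemma le_mul_sq_of_gapInflection_le_abs (hs : gapInflection r ≤ |s|) :
    2 * r ^ 2 - 1 ≤ (r * s) ^ 2 := by
  rcases eq_or_ne r 0 with rfl | hr
  · norm_num
  · rw [gapInflection, div_le_iff₀ (abs_pos.2 hr), mul_comm |s|, ← abs_mul, sqrt_le_iff,
      sq_abs] at hs
    exact hs.2

lemma min_le_biasEntropyGap (hr : |r| ≤ 1) (hs : |s| ≤ 1) :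
    min (biasEntropyGap r 0) (biasEntropyGap r 1) ≤ biasEntropyGap r s := by
  have hc₀ := gapInflection_nonneg r
  have hc₁ := gapInflection_le_one hr
  have hconv : ConvexOn ℝ (Icc (-gapInflection r) (gapInflection r)) (biasEntropyGap r) := by
    refine convexOn_biasEntropyGap hr (convex_Icc _ _) ?_ ?_ <;> rw [interior_Icc] <;> intro x hx
    · exact (abs_lt.2 hx).trans_le hc₁
    · exact mul_sq_le_of_abs_lt_gapInflection (abs_lt.2 hx)
  have hconc : ConcaveOn ℝ (Icc (gapInflection r) 1) (biasEntropyGap r) := by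
    refine concaveOn_biasEntropyGap hr (convex_Icc _ _) ?_ ?_ <;> rw [interior_Icc] <;> intro x hx
    · exact abs_lt.2 ⟨by linarith [hx.1], hx.2⟩
    · exact le_mul_sq_of_gapInflection_le_abs (hx.1.le.trans (le_abs_self x))
  exact min_le_of_even_of_convexOn_of_concaveOn (biasEntropyGap_even r) hc₀ hconv hconc hs

end Gap

section Objective

variable {r α β : ℝ}

lemma binEnt_eq_binEntropy_div_log_two (p : ℝ) : binEnt p = binEntropy p / log 2 := by
  simp only [binEnt, binEntropy, logb, log_inv]
  ring

lemma binEnt_one : binEnt 1 = 0 := by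
  rw [binEnt_eq_binEntropy_div_log_two, binEntropy_one, zero_div]

lemma binEnt_two_inv : binEnt 2⁻¹ = 1 := by
  rw [binEnt_eq_binEntropy_div_log_two, binEntropy_two_inv, div_self (log_pos one_lt_two).ne']

lemma tFun_zero (r : ℝ) : tFun r 0 = 1 / 2 := by
  norm_num [tFun, gFun, binEnt_one]

lemma tFun_half (r : ℝ) : tFun r (1 / 2) = binEnt ((1 + r) / 2) := by
  have hg (r : ℝ) : gFun r (1 / 2) = 1 := by
    have hmid : (1 + r) / 2 - 2 * (1 / 2) ^ 2 * r = 2⁻¹ := by ring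
    rw [gFun, hmid, binEnt_two_inv]
  rw [tFun, hg, hg]
  ring

lemma tFun_eq_biasEntropyGap (r α : ℝ) :
    tFun r α = 1 / 2 + (biasEntropy r + biasEntropyGap r (1 - 4 * α ^ 2)) / log 2 := by
  have hg (r : ℝ) : gFun r α = biasEntropy (r * (1 - 4 * α ^ 2)) / log 2 := by
    rw [gFun, binEnt_eq_binEntropy_div_log_two, biasEntropy]
    ring_nf
  rw [tFun, hg, hg, binEnt_eq_binEntropy_div_log_two, ← biasEntropy, biasEntropyGap, one_mul]
  ring

lemma tFun_le_tFun_of_biasEntropyGap_le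
    (h : biasEntropyGap r (1 - 4 * α ^ 2) ≤ biasEntropyGap r (1 - 4 * β ^ 2)) :
    tFun r α ≤ tFun r β := by
  rw [tFun_eq_biasEntropyGap, tFun_eq_biasEntropyGap]
  gcongr

lemma min_half_binEnt_le_tFun (hr : |r| ≤ 1) (hα : α ^ 2 ≤ 1 / 2) :
    min (1 / 2) (binEnt ((1 + r) / 2)) ≤ tFun r α := by
  have hs : |1 - 4 * α ^ 2| ≤ 1 := abs_le.2 ⟨by linarith, by linarith [sq_nonneg α]⟩
  rw [← tFun_zero r, ← tFun_half r]
  rcases min_le_iff.1 (min_le_biasEntropyGap hr hs) with h | h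
  · have hs_half : (1 - 4 * (1 / 2) ^ 2 : ℝ) = 0 := by norm_num
    exact min_le_of_right_le (tFun_le_tFun_of_biasEntropyGap_le (by rwa [hs_half]))
  · have hs_zero : (1 - 4 * 0 ^ 2 : ℝ) = 1 := by norm_num
    exact min_le_of_left_le (tFun_le_tFun_of_biasEntropyGap_le (by rwa [hs_zero]))

end Objective

theorem stmt_2_general {r : ℝ} (hr : |r| ≤ 1) :
    IsLeast (tFun r '' Icc 0 (1 / √2)) (min (1 / 2) (binEnt ((1 + r) / 2)))
    ∧ tFun r 0 = 1 / 2 ∧ tFun r (1 / 2) = binEnt ((1 + r) / 2) := by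
  have hhalf : (1 / 2 : ℝ) ≤ 1 / √2 :=
    one_div_le_one_div_of_le (sqrt_pos.2 two_pos) (sqrt_le_self_iff.2 (.inr one_le_two))
  refine ⟨⟨?_, ?_⟩, tFun_zero r, tFun_half r⟩
  · rcases min_choice (1 / 2) (binEnt ((1 + r) / 2)) with hmin | hmin <;> rw [hmin]
    · exact ⟨0, ⟨le_rfl, by positivity⟩, tFun_zero r⟩
    · exact ⟨1 / 2, ⟨by norm_num, hhalf⟩, tFun_half r⟩
  · rintro _ ⟨α, ⟨hα₀, hα₁⟩, rfl⟩
    refine min_half_binEnt_le_tFun hr ?_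
    calc α ^ 2 ≤ (1 / √2) ^ 2 := by gcongr
      _ = 1 / 2 := by rw [div_pow, one_pow, sq_sqrt zero_le_two]

/-- For all `r ∈ [0,1]`, the infimum of `t(r,α)` over `α ∈ [0, 1/√2]` equals
`min(1/2, h((1+r)/2))`; moreover `t(r,0) = 1/2` and `t(r,1/2) = h((1+r)/2)`,
so the infimum is attained at `α = 0` or at `α = 1/2`. -/
theorem stmt_2 (r : ℝ) (hr : r ∈ Set.Icc (0 : ℝ) 1) :
    sInf (tFun r '' Set.Icc (0 : ℝ) (1 / Real.sqrt 2)) = min (1 / 2) (binEnt ((1 + r) / 2))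
    ∧ tFun r 0 = 1 / 2 ∧ tFun r (1 / 2) = binEnt ((1 + r) / 2) := by
  have hr_abs : |r| ≤ 1 := abs_le.2 ⟨by linarith [hr.1], hr.2⟩
  exact (stmt_2_general hr_abs).imp_left IsLeast.csInf_eq
end

section
/- For all r ∈ [0,1], the derivative of the function α ↦ t(r,α) tends to 0 as α tends to 0 from the right, i.e. the limit of (d/dα) t(r,α) along the filter 𝓝[>] 0 is 0. -/
open Filter Topology

/-!
The derivative of the binary entropy blows up only logarithmically at `0` and `1`. If `f` is
analytic with a critical point at `x`, then `f'` vanishes to first order there, whereas `log f` and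
`log (1 - f)` are at worst `n * log |y - x| + O(1)`; hence `(h ∘ f)' → 0` at `x`, even when `f x` is
an endpoint of `[0, 1]`. Both `g(1, ·)` and `g(r, ·)` are of this form, with critical point `α = 0`.
-/

section Meromorphic

variable {f g : ℝ → ℝ} {x : ℝ}

lemma tendsto_mul_log_sub (hg : DifferentiableAt ℝ g x) (hgx : g x = 0) :
    Tendsto (fun y => g y * Real.log (y - x)) (𝓝 x) (𝓝 0) := by
  have hlog : Tendsto (fun y => (y - x) * Real.log (y - x)) (𝓝 x) (𝓝 0) :=
    (Real.continuous_mul_log.comp (continuous_sub_right x)).tendsto' x 0 (by simp)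
  have hslope : Tendsto (dslope g x) (𝓝 x) (𝓝 (dslope g x x)) :=
    (continuousAt_dslope_same.2 hg).tendsto
  refine (mul_zero (dslope g x x) ▸ hslope.mul hlog).congr fun y => ?_
  rw [← sub_smul_dslope_of_zero hgx y, smul_eq_mul]
  ring

lemma tendsto_mul_log_of_meromorphicAt (hf : MeromorphicAt f x) (hg : DifferentiableAt ℝ g x)
    (hgx : g x = 0) : Tendsto (fun y => g y * Real.log (f y)) (𝓝[≠] x) (𝓝 0) := by
  by_cases htop : meromorphicOrderAt f x = ⊤
  · refine tendsto_const_nhds.congr' ?_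
    filter_upwards [meromorphicOrderAt_eq_top_iff.1 htop] with y hy
    rw [hy, Real.log_zero, mul_zero]
  obtain ⟨u, hu, hux, hfu⟩ := (meromorphicOrderAt_ne_top_iff hf).1 htop
  set n : ℤ := (meromorphicOrderAt f x).untop₀
  have hunit : Tendsto (fun y => g y * Real.log (u y)) (𝓝 x) (𝓝 0) := by
    simpa only [hgx, zero_mul] using hg.continuousAt.tendsto.mul (hu.continuousAt.log hux).tendsto
  have hsum : Tendsto (fun y => n * (g y * Real.log (y - x)) + g y * Real.log (u y))
      (𝓝[≠] x) (𝓝 0) := by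
    simpa only [mul_zero, add_zero] using
      (((tendsto_mul_log_sub hg hgx).const_mul (n : ℝ)).add hunit).mono_left nhdsWithin_le_nhds
  refine hsum.congr' ?_
  filter_upwards [hfu, self_mem_nhdsWithin,
    (hu.continuousAt.eventually_ne hux).filter_mono nhdsWithin_le_nhds] with y hfy hyx huy
  rw [hfy, smul_eq_mul, Real.log_mul (zpow_ne_zero n (sub_ne_zero.2 hyx)) huy, Real.log_zpow]
  ring

end Meromorphic

section BinaryEntropy

lemma binEnt_eq_binEntropy_div_log_two_s5 : binEnt = fun p => Real.binEntropy p / Real.log 2 := by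
  funext p
  simp only [binEnt, Real.binEntropy, Real.logb, Real.log_inv]
  ring

lemma hasDerivAt_binEnt {p : ℝ} (hp0 : p ≠ 0) (hp1 : p ≠ 1) :
    HasDerivAt binEnt ((Real.log (1 - p) - Real.log p) / Real.log 2) p :=
  binEnt_eq_binEntropy_div_log_two_s5 ▸ (Real.hasDerivAt_binEntropy hp0 hp1).div_const _

lemma tendsto_deriv_binEnt_comp {f : ℝ → ℝ} {x : ℝ} (hf : AnalyticAt ℝ f x) (hfx : deriv f x = 0)
    (hne : ∀ᶠ y in 𝓝[≠] x, f y ≠ 0 ∧ f y ≠ 1) :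
    Tendsto (deriv (binEnt ∘ f)) (𝓝[≠] x) (𝓝 0) := by
  have hdiff : DifferentiableAt ℝ (deriv f) x := hf.deriv.differentiableAt
  have hlog : Tendsto (fun y => deriv f y * Real.log (f y)) (𝓝[≠] x) (𝓝 0) :=
    tendsto_mul_log_of_meromorphicAt hf.meromorphicAt hdiff hfx
  have hlog_one_sub : Tendsto (fun y => deriv f y * Real.log (1 - f y)) (𝓝[≠] x) (𝓝 0) :=
    tendsto_mul_log_of_meromorphicAt (analyticAt_const.sub hf).meromorphicAt hdiff hfx
  have hlim := (hlog_one_sub.sub hlog).div_const (Real.log 2)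
  rw [sub_zero, zero_div] at hlim
  refine hlim.congr' ?_
  filter_upwards [hne, hf.eventually_analyticAt.filter_mono nhdsWithin_le_nhds]
    with y ⟨hy0, hy1⟩ hfy
  rw [((hasDerivAt_binEnt hy0 hy1).comp y hfy.differentiableAt.hasDerivAt).deriv]
  ring

end BinaryEntropy

section ShiftedEntropy

variable {r : ℝ}

lemma eventually_gFun_arg_mem_Ioo (hr : r ∈ Set.Icc (-1) 1) :
    ∀ᶠ α in 𝓝[≠] (0 : ℝ), (1 + r) / 2 - 2 * α ^ 2 * r ∈ Set.Ioo 0 1 := by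
  have hsmall : ∀ᶠ α in 𝓝[≠] (0 : ℝ), 2 * α ^ 2 < 1 :=
    (Continuous.tendsto' (by fun_prop) 0 0 (by simp)).eventually_lt_const one_pos
      |>.filter_mono nhdsWithin_le_nhds
  filter_upwards [hsmall, self_mem_nhdsWithin] with α hα (hα0 : α ≠ 0)
  have hpos : 0 < 2 * α ^ 2 := by positivity
  -- The argument of `h` in `g(r, α)` is `(1 + r * (1 - 4 * α ^ 2)) / 2`.
  have habs : |r * (1 - 2 * (2 * α ^ 2))| < 1 := by
    rw [abs_mul]
    exact mul_lt_one_of_nonneg_of_lt_one_right (abs_le.2 hr) (abs_nonneg _)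
      (abs_lt.2 ⟨by linarith, by linarith⟩)
  obtain ⟨hlower, hupper⟩ := abs_lt.1 habs
  constructor <;> linarith

lemma eventually_differentiableAt_gFun (hr : r ∈ Set.Icc (-1) 1) :
    ∀ᶠ α in 𝓝[≠] (0 : ℝ), DifferentiableAt ℝ (gFun r) α := by
  filter_upwards [eventually_gFun_arg_mem_Ioo hr] with α hα
  exact (hasDerivAt_binEnt hα.1.ne' hα.2.ne).differentiableAt.comp α (by fun_prop)

lemma tendsto_deriv_gFun (hr : r ∈ Set.Icc (-1) 1) :
    Tendsto (deriv (gFun r)) (𝓝[≠] 0) (𝓝 0) := by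
  refine tendsto_deriv_binEnt_comp (f := fun α => (1 + r) / 2 - 2 * α ^ 2 * r) (by fun_prop)
    (by simp) ?_
  exact (eventually_gFun_arg_mem_Ioo hr).mono fun _ h => ⟨h.1.ne', h.2.ne⟩

end ShiftedEntropy

theorem stmt_5_general {r : ℝ} (hr : r ∈ Set.Icc (-1) 1) :
    Tendsto (deriv (tFun r)) (𝓝[≠] 0) (𝓝 0) := by
  have one_mem : (1 : ℝ) ∈ Set.Icc (-1) 1 := ⟨by norm_num, le_rfl⟩
  have hlim := ((tendsto_deriv_gFun one_mem).div_const 2).sub (tendsto_deriv_gFun hr)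
  rw [zero_div, sub_zero] at hlim
  refine hlim.congr' ?_
  filter_upwards [eventually_differentiableAt_gFun one_mem, eventually_differentiableAt_gFun hr]
    with α h_one h_r
  exact ((((h_one.hasDerivAt.const_add 1).div_const 2).add_const _).sub h_r.hasDerivAt).deriv.symm

/-- For all `r ∈ [0,1]`, the derivative of `α ↦ t(r,α)` tends to `0` as
`α → 0⁺`, i.e. along the filter `𝓝[>] 0`. -/
theorem stmt_5 (r : ℝ) (hr : r ∈ Set.Icc (0 : ℝ) 1) :
    Tendsto (fun α => deriv (fun a => tFun r a) α) (𝓝[>] (0 : ℝ)) (𝓝 0) :=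
  (stmt_5_general (Set.Icc_subset_Icc_left (by norm_num) hr)).mono_left (nhdsGT_le_nhdsNE 0)
end
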